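/- Let L* be a relational language containing, for each n ≥ 1 and each E_n-class V of n-element subsets of M₀, a distinct n-ary relation symbol P_V, and let M* be the L*-expansion of the underlying set of M₀ in which P_V holds exactly on the n-tuples of pairwise distinct elements whose underlying set lies in V. Then for every finite sublanguage L' ⊆ L*, the reduct M*(L') of M* to L' is an ultrahomogeneous structure that is universal for the class K(L') of all finite L'-structures in which every relation of arity l holds only on tuples of pairwise distinct elements, is invariant under all permutations of its arguments, and any two distinct relations of L' of the same arity l have disjoint interpretations; i.e., every member of K(L') embeds into M*(L'), and every isomorphism between finite substructures of M*(L') extends to an automorphism of M*(L'). -/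

import Mathlib

open FirstOrder Language Structure CategoryTheory

/-- The language `L₀` with a `2n`-ary relation symbol `E_n` for each `n ≥ 1`. -/
def L₀ : FirstOrder.Language where
  Functions := fun _ => Empty
  Relations := fun k => {n : ℕ // 0 < n ∧ k = n + n}

/-- The relation symbol `E_n`. -/
def Esymb (n : ℕ) (hn : 0 < n) : L₀.Relations (n + n) := ⟨n, hn, rfl⟩

/-- `E_n(x̄, ȳ)` in an `L₀`-structure. -/
def ERel (M : Type*) [L₀.Structure M] (n : ℕ) (hn : 0 < n) (x y : Fin n → M) : Prop :=
  Structure.RelMap (Esymb n hn) (Fin.append x y)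

/-- The defining conditions for membership in `K₀`: each `E_n` holds only on pairs of
injective `n`-tuples, is invariant under permuting the entries of each tuple separately,
and induces an equivalence relation on `n`-element subsets. -/
def IsK0Struct (C : Type*) [L₀.Structure C] : Prop :=
  ∀ (n : ℕ) (hn : 0 < n),
    (∀ x y : Fin n → C, ERel C n hn x y → Function.Injective x ∧ Function.Injective y) ∧
    (∀ (x y : Fin n → C) (σ τ : Equiv.Perm (Fin n)),
        ERel C n hn x y → ERel C n hn (x ∘ σ) (y ∘ τ)) ∧
    (∀ x : Fin n → C, Function.Injective x → ERel C n hn x x) ∧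
    (∀ x y : Fin n → C, ERel C n hn x y → ERel C n hn y x) ∧
    (∀ x y z : Fin n → C, ERel C n hn x y → ERel C n hn y z → ERel C n hn x z)

/-- The class `K₀` of finite `L₀`-structures as above. -/
def K₀ : Set (Bundled L₀.Structure) := {C | Finite C ∧ IsK0Struct C}

/-- A purely relational language with relation symbols `ι k` in each arity `k`. -/
def LStar (ι : ℕ → Type) : FirstOrder.Language where
  Functions := fun _ => Empty
  Relations := ι

/-- The structure interpreting each symbol `i : ι k` by the set of tuples `cls k i`. -/
def LStarStructure (ι : ℕ → Type) (M : Type*) (cls : ∀ k, ι k → (Fin k → M) → Prop) :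
    (LStar ι).Structure M where
  funMap := fun f => f.elim
  RelMap := fun {k} i v => cls k i v

/-- The class `K(L')`: finite `L'`-structures in which every relation holds only on
tuples of pairwise distinct elements, is invariant under all permutations of its
arguments, and distinct relations of the same arity have disjoint interpretations. -/
def IsKL (L : FirstOrder.Language) (A : Type*) [L.Structure A] : Prop :=
  (∀ (k : ℕ) (R : L.Relations k) (v : Fin k → A),
      Structure.RelMap R v → Function.Injective v) ∧
  (∀ (k : ℕ) (R : L.Relations k) (v : Fin k → A) (σ : Equiv.Perm (Fin k)),
      Structure.RelMap R v → Structure.RelMap R (v ∘ σ)) ∧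
  (∀ (k : ℕ) (R R' : L.Relations k) (v : Fin k → A), R ≠ R' →
      Structure.RelMap R v → ¬ Structure.RelMap R' v)

universe u

/-!
The structure `M*` lies in `K(L*)`, and it determines `M₀`: two injective tuples are related by
`E_n` iff they satisfy the same relations of `M*`. Read as a definition, this turns every finite
member `D` of `K(L*)` into a member of `K₀`, so the extension property of `M₀` extends any
`L*`-embedding `C → D`, with `C ⊆ M*` finite, to a map `D → M*` over `C`. That map may permute
the classes, but it preserves every relation realized in `C`.

Given a finite `A ∈ K(L')` and an `L'`-embedding into `M*` of a part `B` of `A`, choose `C` finite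
containing the image of `B` and a realization of each of the finitely many symbols of `L'`. The free
amalgam `D` of `A` and `C` over `B`, in which the tuples of `A` that do not come from `C` satisfy
only relations of `L'`, again lies in `K(L*)`, and `A → D → M*` is the required extension. It yields
ultrahomogeneity by back-and-forth and universality by taking `B` empty.
-/

/-! ### Induced equivalence relations -/

/-- `x` and `y` are injective tuples satisfying the same relations of `L`; in `M*` this says that
their underlying sets lie in the same `E_n`-class. -/
def SameClass (L : FirstOrder.Language) {A : Type*} [L.Structure A] {n : ℕ} (x y : Fin n → A) :
    Prop :=
  Function.Injective x ∧ Function.Injective y ∧ ∀ R : L.Relations n, RelMap R x ↔ RelMap R y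

/-- The equivalence relations `E_n` of the `L₀`-structure `A` are recovered from its
`L`-structure as `SameClass`. -/
def InducesE (L : FirstOrder.Language) (A : Type*) [L.Structure A] [L₀.Structure A] : Prop :=
  ∀ (n : ℕ) (hn : 0 < n) (x y : Fin n → A), ERel A n hn x y ↔ SameClass L x y

/-- The `L₀`-structure on an `L`-structure in which every `E_n` is `SameClass`. -/
abbrev sameClassStructure (L : FirstOrder.Language) (A : Type*) [L.Structure A] :
    L₀.Structure A where
  funMap f := f.elim
  RelMap R v := SameClass L (fun j => v (Fin.cast R.2.2.symm (Fin.castAdd R.1 j)))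
    (fun j => v (Fin.cast R.2.2.symm (Fin.natAdd R.1 j)))

instance isRelational_L₀ : L₀.IsRelational := fun _ => inferInstanceAs (IsEmpty Empty)

instance isRelational_LStar (ι : ℕ → Type) : (LStar ι).IsRelational :=
  fun _ => inferInstanceAs (IsEmpty Empty)

theorem comp_finAppend {A B : Type*} (f : A → B) {m n : ℕ} (x : Fin m → A) (y : Fin n → A) :
    f ∘ Fin.append x y = Fin.append (f ∘ x) (f ∘ y) := by
  funext j
  induction j using Fin.addCases <;> simp

theorem eRel_comp_iff {A B : Type*} [L₀.Structure A] [L₀.Structure B] (f : A ↪[L₀] B) {n : ℕ}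
    (hn : 0 < n) (x y : Fin n → A) : ERel B n hn (f ∘ x) (f ∘ y) ↔ ERel A n hn x y := by
  rw [ERel, ← comp_finAppend]
  exact f.map_rel (Esymb n hn) (Fin.append x y)

theorem inducesE_sameClassStructure (L : FirstOrder.Language) (A : Type*) [L.Structure A] :
    letI := sameClassStructure L A
    InducesE L A := by
  intro n hn x y
  change SameClass L (fun j => Fin.append x y (Fin.castAdd n j))
    (fun j => Fin.append x y (Fin.natAdd n j)) ↔ SameClass L x y
  simp only [Fin.append_left, Fin.append_right]

theorem sameClass_comp_iff {L : FirstOrder.Language} {A B : Type*} [L.Structure A] [L.Structure B]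
    (f : A ↪[L] B) {n : ℕ} (x y : Fin n → A) :
    SameClass L (f ∘ x) (f ∘ y) ↔ SameClass L x y := by
  simp only [SameClass, f.injective.of_comp_iff, f.map_rel]

/-- An `L`-embedding preserves the induced equivalence relations. -/
def InducesE.toEmbedding {L : FirstOrder.Language} {A B : Type*} [L.Structure A] [L.Structure B]
    [L₀.Structure A] [L₀.Structure B] (hA : InducesE L A) (hB : InducesE L B) (f : A ↪[L] B) :
    A ↪[L₀] B where
  toFun := f
  inj' := f.injective
  map_fun' g := g.elim
  map_rel' := by
    rintro _ ⟨n, hn, rfl⟩ v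
    rw [← Fin.append_castAdd_natAdd (f := v), comp_finAppend]
    exact ((hB n hn _ _).trans (sameClass_comp_iff f _ _)).trans (hA n hn _ _).symm

namespace IsKL

variable {L L' : FirstOrder.Language} {A B : Type*} [L.Structure A] [L.Structure B]

theorem of_embedding (hB : IsKL L B) (f : A ↪[L] B) : IsKL L A := by
  obtain ⟨hinj, hperm, hdisj⟩ := hB
  refine ⟨fun k R v hv => ?_, fun k R v σ hv => ?_, fun k R R' v hne hv hv' => ?_⟩
  · exact (hinj k R (f ∘ v) ((f.map_rel R v).2 hv)).of_comp
  · exact (f.map_rel R (v ∘ σ)).1 (hperm k R (f ∘ v) σ ((f.map_rel R v).2 hv))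
  · exact hdisj k R R' (f ∘ v) hne ((f.map_rel R v).2 hv) ((f.map_rel R' v).2 hv')

theorem of_isExpansionOn (hA : IsKL L A) (φ : L' →ᴸ L) (hφ : φ.Injective) [L'.Structure A]
    [φ.IsExpansionOn A] : IsKL L' A := by
  simp only [IsKL, ← φ.map_onRelation (M := A)]
  exact ⟨fun k R => hA.1 k _, fun k R => hA.2.1 k _,
    fun k R R' v hne => hA.2.2 k _ _ v (hφ.onRelation.ne hne)⟩

theorem relMap_iff_sameClass (hA : IsKL L A) {n : ℕ} {R : L.Relations n} {x : Fin n → A}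
    (hx : RelMap R x) (y : Fin n → A) : RelMap R y ↔ SameClass L x y := by
  obtain ⟨hinj, -, hdisj⟩ := hA
  refine ⟨fun hy => ⟨hinj n R x hx, hinj n R y hy, fun R' => ?_⟩, fun h => (h.2.2 R).1 hx⟩
  by_cases hR : R = R'
  · subst hR
    exact iff_of_true hx hy
  · exact iff_of_false (hdisj n R R' x hR hx) (hdisj n R R' y hR hy)

theorem relMap_comp_iff (hA : IsKL L A) (hB : IsKL L B) {h : A → B} {n : ℕ}
    (h_class : ∀ x y : Fin n → A, SameClass L (h ∘ x) (h ∘ y) ↔ SameClass L x y)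
    {R : L.Relations n} {x : Fin n → A} (hx : RelMap R x) (hhx : RelMap R (h ∘ x))
    (y : Fin n → A) : RelMap R (h ∘ y) ↔ RelMap R y := by
  rw [hB.relMap_iff_sameClass hhx, h_class, hA.relMap_iff_sameClass hx]

theorem relMap_comp_perm_iff (hA : IsKL L A) {n : ℕ} (R : L.Relations n) (x : Fin n → A)
    (σ : Equiv.Perm (Fin n)) : RelMap R (x ∘ σ) ↔ RelMap R x := by
  refine ⟨fun h => ?_, hA.2.1 n R x σ⟩
  simpa only [Function.comp_assoc, Equiv.self_comp_symm, Function.comp_id] using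
    hA.2.1 n R (x ∘ σ) σ.symm h

theorem isK0Struct (hA : IsKL L A) [L₀.Structure A] (hE : InducesE L A) : IsK0Struct A := by
  intro n hn
  simp only [hE n hn]
  refine ⟨fun x y h => ⟨h.1, h.2.1⟩, fun x y σ τ ⟨hx, hy, h⟩ => ?_,
    fun x hx => ⟨hx, hx, fun R => Iff.rfl⟩, fun x y ⟨hx, hy, h⟩ => ⟨hy, hx, fun R => (h R).symm⟩,
    fun x y z ⟨hx, _, hxy⟩ ⟨_, hz, hyz⟩ => ⟨hx, hz, fun R => (hxy R).trans (hyz R)⟩⟩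
  refine ⟨hx.comp σ.injective, hy.comp τ.injective, fun R => ?_⟩
  rw [hA.relMap_comp_perm_iff, hA.relMap_comp_perm_iff]
  exact h R

end IsKL

theorem isK0Struct_of_forall_fg {M : Type*} [L₀.Structure M]
    (h : ∀ S : L₀.Substructure M, S.FG → IsK0Struct S) : IsK0Struct M := by
  intro n hn
  have lift_tuples (x y z : Fin n → M) : ∃ (S : L₀.Substructure M) (x' y' z' : Fin n → S),
      IsK0Struct S ∧ x = S.subtype ∘ x' ∧ y = S.subtype ∘ y' ∧ z = S.subtype ∘ z' := by
    let S := Substructure.closure L₀ (Set.range x ∪ Set.range y ∪ Set.range z)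
    have hS : S.FG := Substructure.fg_closure (((Set.finite_range x).union
      (Set.finite_range y)).union (Set.finite_range z))
    have mem_S {m : M} (hm : m ∈ Set.range x ∪ Set.range y ∪ Set.range z) : m ∈ S :=
      Substructure.subset_closure hm
    exact ⟨S, fun j => ⟨x j, mem_S (.inl (.inl ⟨j, rfl⟩))⟩,
      fun j => ⟨y j, mem_S (.inl (.inr ⟨j, rfl⟩))⟩, fun j => ⟨z j, mem_S (.inr ⟨j, rfl⟩)⟩,
      h S hS, rfl, rfl, rfl⟩
  refine ⟨fun x y hxy => ?_, fun x y σ τ hxy => ?_, fun x hx => ?_, fun x y hxy => ?_,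
    fun x y z hxy hyz => ?_⟩
  · obtain ⟨S, x', y', -, hS, rfl, rfl, -⟩ := lift_tuples x y y
    have hinj := (hS n hn).1 x' y' ((eRel_comp_iff _ hn _ _).1 hxy)
    exact ⟨S.subtype.injective.comp hinj.1, S.subtype.injective.comp hinj.2⟩
  · obtain ⟨S, x', y', -, hS, rfl, rfl, -⟩ := lift_tuples x y y
    exact (eRel_comp_iff S.subtype hn _ _).2
      ((hS n hn).2.1 x' y' σ τ ((eRel_comp_iff _ hn _ _).1 hxy))
  · obtain ⟨S, x', -, -, hS, rfl, -, -⟩ := lift_tuples x x x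
    exact (eRel_comp_iff _ hn _ _).2 ((hS n hn).2.2.1 x' hx.of_comp)
  · obtain ⟨S, x', y', -, hS, rfl, rfl, -⟩ := lift_tuples x y y
    rw [eRel_comp_iff] at hxy ⊢
    exact (hS n hn).2.2.2.1 x' y' hxy
  · obtain ⟨S, x', y', z', hS, rfl, rfl, rfl⟩ := lift_tuples x y z
    rw [eRel_comp_iff] at hxy hyz ⊢
    exact (hS n hn).2.2.2.2 x' y' z' hxy hyz

theorem isK0Struct_of_age_eq {M : Type*} [L₀.Structure M] (hage : L₀.age M = K₀) :
    IsK0Struct M := by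
  refine isK0Struct_of_forall_fg fun S hS => ?_
  have hS_age : (⟨S, inferInstance⟩ : Bundled L₀.Structure) ∈ L₀.age M :=
    ⟨S.fg_iff_structure_fg.1 hS, ⟨S.subtype⟩⟩
  rw [hage] at hS_age
  exact hS_age.2

/-! ### Naming the equivalence classes -/

/-- The relation symbols of `L` name the `E_n`-classes of `M` bijectively, each symbol holding
on the injective tuples whose underlying set lies in the class it names: this is the defining
property of `M*`. -/
structure NamesClasses (L : FirstOrder.Language) (M : Type*) [L.Structure M] [L₀.Structure M] :
    Prop where
  arity_pos : ∀ k, L.Relations k → 0 < k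
  exists_class : ∀ (k : ℕ) (hk : 0 < k) (R : L.Relations k), ∃ x : Fin k → M,
    Function.Injective x ∧ ∀ v, RelMap R v ↔ Function.Injective v ∧ ERel M k hk x v
  exists_relMap : ∀ k, 0 < k → ∀ x : Fin k → M, Function.Injective x →
    ∃ R : L.Relations k, RelMap R x
  relation_unique : ∀ (k : ℕ) (R R' : L.Relations k) (v : Fin k → M),
    RelMap R v → RelMap R' v → R = R'

namespace NamesClasses

variable {L : FirstOrder.Language} {M : Type*} [L.Structure M] [L₀.Structure M]

theorem isKL (h : NamesClasses L M) (hM : IsK0Struct M) : IsKL L M := by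
  refine ⟨fun k R v hv => ?_, fun k R v σ hv => ?_,
    fun k R R' v hne hv hv' => hne (h.relation_unique k R R' v hv hv')⟩ <;>
    obtain ⟨x, -, hx⟩ := h.exists_class k (h.arity_pos k R) R
  · exact ((hx v).1 hv).1
  · obtain ⟨hv_inj, hxv⟩ := (hx v).1 hv
    exact (hx _).2 ⟨hv_inj.comp σ.injective, (hM k _).2.1 x v 1 σ hxv⟩

theorem inducesE (h : NamesClasses L M) (hM : IsK0Struct M) : InducesE L M := by
  intro n hn x y
  obtain ⟨hinj, -, -, hsymm, htrans⟩ := hM n hn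
  constructor
  · intro hxy
    obtain ⟨hx, hy⟩ := hinj x y hxy
    refine ⟨hx, hy, fun R => ?_⟩
    obtain ⟨r, -, hr⟩ := h.exists_class n hn R
    rw [hr, hr]
    exact ⟨fun hrx => ⟨hy, htrans r x y hrx.2 hxy⟩,
      fun hry => ⟨hx, htrans r y x hry.2 (hsymm x y hxy)⟩⟩
  · rintro ⟨hx, -, h_iff⟩
    obtain ⟨R, hRx⟩ := h.exists_relMap n hn x hx
    obtain ⟨r, -, hr⟩ := h.exists_class n hn R
    exact htrans x r y (hsymm r x ((hr x).1 hRx).2) ((hr y).1 ((h_iff R).1 hRx)).2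

theorem exists_realization (h : NamesClasses L M) (hM : IsK0Struct M) {k : ℕ}
    (R : L.Relations k) : ∃ x : Fin k → M, RelMap R x := by
  have hk := h.arity_pos k R
  obtain ⟨x, hx_inj, hx⟩ := h.exists_class k hk R
  exact ⟨x, (hx x).2 ⟨hx_inj, (hM k hk).2.2.1 x hx_inj⟩⟩

end NamesClasses

/-! ### Amalgamation over a sublanguage -/

theorem exists_finite_amalgam {A B C : Type u} [Finite A] [Finite C] {f : B → A} {g : B → C}
    (hf : Function.Injective f) (hg : Function.Injective g) :
    ∃ (D : Type u) (i : A → D) (j : C → D), Finite D ∧ Function.Injective i ∧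
      Function.Injective j ∧ ∀ a c, i a = j c ↔ ∃ b, f b = a ∧ g b = c := by
  have : Mono (↾f) := (mono_iff_injective _).2 hf
  have : Mono (↾g) := (mono_iff_injective _).2 hg
  exact ⟨Limits.Types.Pushout (↾f) (↾g), Limits.Types.Pushout.inl (↾f) (↾g),
    Limits.Types.Pushout.inr (↾f) (↾g), inferInstanceAs (Finite (Quot _)),
    (mono_iff_injective _).1 inferInstance, (mono_iff_injective _).1 inferInstance,
    Limits.Types.Pushout.inl_eq_inr_iff (↾f) (↾g)⟩

section Amalgam

variable {L L' : FirstOrder.Language} (φ : L' →ᴸ L) {A C D : Type*}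
  [L'.Structure A] [L.Structure C]

/-- `A` and `C` satisfy the same relations of `L'` on tuples identified by `i` and `j`. -/
def AgreeOnOverlap (i : A → D) (j : C → D) : Prop :=
  ∀ (k : ℕ) (R : L'.Relations k) (w : Fin k → A) (w' : Fin k → C), i ∘ w = j ∘ w' →
    (RelMap R w ↔ RelMap (φ.onRelation R) w')

variable {φ} {i : A → D} {j : C → D}

theorem agreeOnOverlap_of_common_embedding {B : Type*} [L'.Structure B] {g : B → C} (f : B ↪[L'] A)
    (hg : ∀ (k : ℕ) (R : L'.Relations k) (u : Fin k → B),
      RelMap (φ.onRelation R) (g ∘ u) ↔ RelMap R u)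
    (hij : ∀ a c, i a = j c → ∃ b, f b = a ∧ g b = c) : AgreeOnOverlap φ i j := by
  intro k R w w' hw
  choose u hfu hgu using fun l => hij (w l) (w' l) (congrFun hw l)
  obtain rfl : f ∘ u = w := funext hfu
  obtain rfl : g ∘ u = w' := funext hgu
  rw [f.map_rel, hg]

variable [L.IsRelational]

/-- The least `L`-structure on `D` making `i : A → D` a homomorphism of `L'`-structures and
`j : C → D` a homomorphism of `L`-structures: the free amalgam, when `i` and `j` are injective and
`A` and `C` agree on the overlap of their images. -/
abbrev amalgamStructure (φ : L' →ᴸ L) (i : A → D) (j : C → D) : L.Structure D where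
  RelMap {k} R v := (∃ w : Fin k → C, v = j ∘ w ∧ RelMap R w) ∨
    ∃ (R' : L'.Relations k) (w : Fin k → A), φ.onRelation R' = R ∧ v = i ∘ w ∧ RelMap R' w

theorem AgreeOnOverlap.relMap_comp_right_iff (h : AgreeOnOverlap φ i j) (hj : Function.Injective j)
    {k : ℕ} (R : L.Relations k) (w : Fin k → C) :
    letI := amalgamStructure φ i j
    RelMap R (j ∘ w) ↔ RelMap R w := by
  constructor
  · rintro (⟨w', hw', hR⟩ | ⟨R', w', rfl, hw', hR⟩)
    · rwa [hj.comp_left hw']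
    · exact (h k R' w' w hw'.symm).1 hR
  · exact fun hR => .inl ⟨w, rfl, hR⟩

theorem AgreeOnOverlap.relMap_comp_left_iff (h : AgreeOnOverlap φ i j) (hi : Function.Injective i)
    (hφ : φ.Injective) {k : ℕ} (R : L'.Relations k) (w : Fin k → A) :
    letI := amalgamStructure φ i j
    RelMap (φ.onRelation R) (i ∘ w) ↔ RelMap R w := by
  constructor
  · rintro (⟨w', hw', hR⟩ | ⟨R', w', hR', hw', hR⟩)
    · exact (h k R w w' hw').2 hR
    · rwa [hi.comp_left hw', ← hφ.onRelation hR']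
  · exact fun hR => .inr ⟨R, w, rfl, rfl, hR⟩

theorem AgreeOnOverlap.isKL (h : AgreeOnOverlap φ i j) (hi : Function.Injective i)
    (hj : Function.Injective j) (hA : IsKL L' A) (hC : IsKL L C) :
    letI := amalgamStructure φ i j
    IsKL L D := by
  refine ⟨?_, ?_, ?_⟩
  · rintro k _ _ (⟨w, rfl, hR⟩ | ⟨R', w, rfl, rfl, hR⟩)
    · exact hj.comp (hC.1 k _ w hR)
    · exact hi.comp (hA.1 k R' w hR)
  · rintro k _ _ σ (⟨w, rfl, hR⟩ | ⟨R', w, rfl, rfl, hR⟩)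
    · exact .inl ⟨w ∘ σ, rfl, hC.2.1 k _ w σ hR⟩
    · exact .inr ⟨R', w ∘ σ, rfl, rfl, hA.2.1 k R' w σ hR⟩
  · rintro k R₁ R₂ _ hne (⟨w₁, rfl, h₁⟩ | ⟨R₁', w₁, rfl, rfl, h₁⟩)
      (⟨w₂, hw, h₂⟩ | ⟨R₂', w₂, rfl, hw, h₂⟩)
    · rw [← hj.comp_left hw] at h₂
      exact hC.2.2 k R₁ R₂ w₁ hne h₁ h₂
    · exact hC.2.2 k _ _ w₁ hne h₁ ((h k R₂' w₂ w₁ hw.symm).1 h₂)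
    · exact hC.2.2 k _ _ w₂ hne ((h k R₁' w₁ w₂ hw).1 h₁) h₂
    · rw [← hi.comp_left hw] at h₂
      exact hA.2.2 k R₁' R₂' w₁ (fun hR => hne (congrArg (φ.onRelation ·) hR)) h₁ h₂

end Amalgam

/-! ### Extending embeddings into `M*` -/

theorem exists_extension_of_embedding {L : FirstOrder.Language} {M D : Type u}
    [L₀.Structure M] (hUH : L₀.IsUltrahomogeneous M) (hage : L₀.age M = K₀) [L.Structure M]
    (hM : IsKL L M) (hME : InducesE L M) {C : L.Substructure M} [Finite C] [L.Structure D]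
    [Finite D] (hD : IsKL L D) (e : C ↪[L] D) :
    ∃ h : D → M, Function.Injective h ∧ (∀ c, h (e c) = c) ∧
      ∀ (k : ℕ), 0 < k → ∀ (R : L.Relations k) (x : Fin k → C), RelMap R x →
        ∀ y : Fin k → D, RelMap R (h ∘ y) ↔ RelMap R y := by
  let := sameClassStructure L C
  let := sameClassStructure L D
  have hCE : InducesE L C := inducesE_sameClassStructure L C
  have hDE : InducesE L D := inducesE_sameClassStructure L D
  have hD_age : (⟨D, inferInstance⟩ : Bundled L₀.Structure) ∈ L₀.age M := by
    rw [hage]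
    exact ⟨‹Finite D›, hD.isK0Struct hDE⟩
  have : Nonempty (D ↪[L₀] M) := hD_age.2
  obtain ⟨h, hh⟩ := hUH.extend_embedding (Structure.fg_iff_finite.2 ‹Finite C›)
    (hCE.toEmbedding hME C.subtype) (hCE.toEmbedding hDE e)
  have h_fix (c : C) : h (e c) = c := (DFunLike.congr_fun hh c).symm
  have h_class (k : ℕ) (hk : 0 < k) (x y : Fin k → D) :
      SameClass L (h ∘ x) (h ∘ y) ↔ SameClass L x y := by
    rw [← hME k hk, ← hDE k hk, eRel_comp_iff]
  refine ⟨h, h.injective, h_fix, fun k hk R x hx y => ?_⟩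
  refine hD.relMap_comp_iff hM (h_class k hk) ((e.map_rel R x).2 hx) ?_ y
  rw [show h ∘ e ∘ x = C.subtype ∘ x from funext fun l => h_fix (x l)]
  exact (C.subtype.map_rel R x).2 hx

theorem exists_finite_substructure_realizing {L L' : FirstOrder.Language} [L.IsRelational]
    {M B : Type*} [L.Structure M] [Finite B] [Finite (Σ k, L'.Relations k)] (φ : L' →ᴸ L)
    (hreal : ∀ (k : ℕ) (R : L'.Relations k), ∃ x : Fin k → M, RelMap (φ.onRelation R) x)
    (g : B → M) :
    ∃ C : L.Substructure M, Finite C ∧ (∀ b, g b ∈ C) ∧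
      ∀ (k : ℕ) (R : L'.Relations k), ∃ x : Fin k → C, RelMap (φ.onRelation R) x := by
  choose rep hrep using fun p : Σ k, L'.Relations k => hreal p.1 p.2
  let C := Substructure.closure L (Set.range g ∪ ⋃ p, Set.range (rep p))
  have hC : C.FG := Substructure.fg_closure
    ((Set.finite_range g).union (Set.finite_iUnion fun p => Set.finite_range (rep p)))
  have rep_mem (p : Σ k, L'.Relations k) (l : Fin p.1) : rep p l ∈ C :=
    Substructure.subset_closure (.inr (Set.mem_iUnion.2 ⟨p, l, rfl⟩))
  exact ⟨C, hC.finite, fun b => Substructure.subset_closure (.inl ⟨b, rfl⟩),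
    fun k R => ⟨fun l => ⟨rep ⟨k, R⟩ l, rep_mem ⟨k, R⟩ l⟩, hrep ⟨k, R⟩⟩⟩

theorem isUltrahomogeneous_of_exists_extension {L : FirstOrder.Language} {M : Type*}
    [L.Structure M] [Countable M]
    (h : ∀ S T : L.Substructure M, S.FG → T.FG → ∀ (hST : S ≤ T) (f : S ↪[L] M),
      ∃ g : T ↪[L] M, ∀ x, g (Substructure.inclusion hST x) = f x) :
    L.IsUltrahomogeneous M := by
  rw [isUltrahomogeneous_iff_IsExtensionPair Structure.cg_of_countable,
    isExtensionPair_iff_exists_embedding_closure_singleton_sup]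
  intro S hS f m
  obtain ⟨g, hg⟩ := h S _ hS ((Substructure.fg_closure_singleton m).sup hS) le_sup_right f
  exact ⟨g, Embedding.ext fun x => (hg x).symm⟩

/-- The embedding of an empty structure; arities are positive because a nullary relation may hold
even in an empty structure. -/
def embeddingOfIsEmpty {L : FirstOrder.Language} [L.IsRelational]
    (hL : ∀ k, L.Relations k → 0 < k) (A B : Type*) [IsEmpty A] [L.Structure A]
    [L.Structure B] : A ↪[L] B where
  toFun := isEmptyElim
  inj' := Function.injective_of_subsingleton _
  map_fun' := isEmptyElim
  map_rel' {k} R v := isEmptyElim (v ⟨0, hL k R⟩)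

namespace NamesClasses

variable {L L' : FirstOrder.Language} [L.IsRelational] [L'.IsRelational]
  [Finite (Σ k, L'.Relations k)] {M : Type u} [L₀.Structure M] [L.Structure M] [L'.Structure M]
  (φ : L' →ᴸ L) [φ.IsExpansionOn M]

theorem exists_extension (h : NamesClasses L M) (hUH : L₀.IsUltrahomogeneous M)
    (hage : L₀.age M = K₀) (hφ : φ.Injective) {A B : Type u} [L'.Structure A] [L'.Structure B]
    [Finite A] (hA : IsKL L' A) (f : B ↪[L'] A) (g : B ↪[L'] M) :
    ∃ e : A ↪[L'] M, ∀ b, e (f b) = g b := by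
  have hM := isK0Struct_of_age_eq hage
  have hMKL := h.isKL hM
  have : Finite B := Finite.of_injective f f.injective
  obtain ⟨C, _, hgC, hreal⟩ :=
    exists_finite_substructure_realizing φ (fun _ R => h.exists_realization hM _) g
  let gC : B → C := fun b => ⟨g b, hgC b⟩
  have hgC_inj : Function.Injective gC := fun _ _ hb => g.injective (congrArg Subtype.val hb)
  have hgC_rel (k) (R : L'.Relations k) (u : Fin k → B) :
      RelMap (φ.onRelation R) (gC ∘ u) ↔ RelMap R u := by
    rw [← g.map_rel, ← φ.map_onRelation]
    rfl
  obtain ⟨D, i, j, _, hi, hj, hij⟩ := exists_finite_amalgam f.injective hgC_inj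
  have hov : AgreeOnOverlap φ i j :=
    agreeOnOverlap_of_common_embedding f hgC_rel fun a c => (hij a c).1
  let := amalgamStructure φ i j
  have hD : IsKL L D := hov.isKL hi hj hA (hMKL.of_embedding C.subtype)
  let jE : C ↪[L] D := ⟨⟨j, hj⟩, isEmptyElim, fun R w => hov.relMap_comp_right_iff hj R w⟩
  obtain ⟨e, he, hej, he_rel⟩ :=
    exists_extension_of_embedding hUH hage hMKL (h.inducesE hM) hD jE
  have heφ (k) (R : L'.Relations k) (v : Fin k → D) :
      RelMap (φ.onRelation R) (e ∘ v) ↔ RelMap (φ.onRelation R) v := by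
    obtain ⟨x, hx⟩ := hreal k R
    exact he_rel k (h.arity_pos k (φ.onRelation R)) _ x hx v
  refine ⟨⟨⟨e ∘ i, he.comp hi⟩, isEmptyElim, fun R w => ?_⟩, fun b => ?_⟩
  · exact ((φ.map_onRelation R (e ∘ i ∘ w)).symm.to_iff.trans (heφ _ R (i ∘ w))).trans
      (hov.relMap_comp_left_iff hi hφ R w)
  · exact (congrArg e ((hij (f b) (gC b)).2 ⟨b, rfl, rfl⟩)).trans (hej (gC b))

theorem isUltrahomogeneous_reduct [Countable M] (h : NamesClasses L M)
    (hUH : L₀.IsUltrahomogeneous M) (hage : L₀.age M = K₀) (hφ : φ.Injective) :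
    L'.IsUltrahomogeneous M := by
  refine isUltrahomogeneous_of_exists_extension fun S T _ hT hST f => ?_
  have : Finite T := hT.finite
  have hM : IsKL L' M := (h.isKL (isK0Struct_of_age_eq hage)).of_isExpansionOn φ hφ
  exact h.exists_extension φ hUH hage hφ (hM.of_embedding T.subtype)
    (Substructure.inclusion hST) f

theorem nonempty_embedding_reduct (h : NamesClasses L M) (hUH : L₀.IsUltrahomogeneous M)
    (hage : L₀.age M = K₀) (hφ : φ.Injective) (A : Type u) [L'.Structure A] [Finite A]
    (hA : IsKL L' A) : Nonempty (A ↪[L'] M) := by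
  let : L'.Structure PEmpty.{u + 1} := { RelMap := fun _ _ => False }
  have hL' (k) (R : L'.Relations k) : 0 < k := h.arity_pos k (φ.onRelation R)
  obtain ⟨e, -⟩ := h.exists_extension φ hUH hage hφ hA
    (embeddingOfIsEmpty hL' PEmpty.{u + 1} A) (embeddingOfIsEmpty hL' _ M)
  exact ⟨e⟩

end NamesClasses

/-- The inclusion of the sublanguage of `LStar ι` with relation symbols `s`. -/
def LStarInclusion {ι : ℕ → Type} (s : ∀ k, Set (ι k)) :
    LStar (fun k => {i : ι k // i ∈ s k}) →ᴸ LStar ι where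
  onFunction _ f := f.elim
  onRelation _ := Subtype.val

theorem LStarInclusion_injective {ι : ℕ → Type} (s : ∀ k, Set (ι k)) :
    (LStarInclusion s).Injective :=
  ⟨fun {_} f => f.elim, fun {_} _ _ h => Subtype.ext h⟩

theorem finite_sigma_subtype {ι : ℕ → Type} {s : ∀ k, Set (ι k)}
    (hs : {p : Σ k, ι k | p.2 ∈ s p.1}.Finite) : Finite (Σ k, {i : ι k // i ∈ s k}) := by
  have := hs.to_subtype
  refine Finite.of_injective (fun p => (⟨⟨p.1, p.2.1⟩, p.2.2⟩ : {p : Σ k, ι k | p.2 ∈ s p.1})) ?_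
  rintro ⟨k, i, hi⟩ ⟨k', i', hi'⟩ h
  cases h
  rfl

/-- let `M*` be the expansion of `M₀` by predicates `P_V` for all
`E_n`-classes `V` (the symbols of arity `k` are indexed by `ι k`, and `cls k i` is the
set of injective `k`-tuples whose underlying set lies in the class indexed by `i`).
Then for every finite sublanguage `L' ⊆ L*` (given by the sets `s k` of symbols), the
reduct `M*(L')` is ultrahomogeneous and universal for the class `K(L')` of finite
`L'`-structures with irreflexive, permutation-invariant and pairwise disjoint
relations. -/
theorem Mstar_finite_reducts_ultrahomogeneous_universal
    (M₀ : Type) [L₀.Structure M₀] [Countable M₀]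
    (hUH : L₀.IsUltrahomogeneous M₀) (hage : L₀.age M₀ = K₀)
    (ι : ℕ → Type) (cls : ∀ k, ι k → (Fin k → M₀) → Prop)
    -- symbols exist only in arities `k ≥ 1`
    (harity : ∀ k, ι k → 0 < k)
    -- each symbol is interpreted by exactly one `E_k`-class
    (hcls : ∀ (k : ℕ) (hk : 0 < k) (i : ι k), ∃ x : Fin k → M₀, Function.Injective x ∧
        ∀ v : Fin k → M₀, cls k i v ↔ (Function.Injective v ∧ ERel M₀ k hk x v))
    -- every `E_k`-class is named by some symbol
    (hsurj : ∀ (k : ℕ) (hk : 0 < k) (x : Fin k → M₀), Function.Injective x →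
        ∃ i : ι k, cls k i x)
    -- distinct symbols name distinct classes
    (hdistinct : ∀ (k : ℕ) (i j : ι k) (v : Fin k → M₀), cls k i v → cls k j v → i = j) :
    ∀ (s : ∀ k, Set (ι k)), {p : Σ k, ι k | p.2 ∈ s p.1}.Finite →
      @Language.IsUltrahomogeneous (LStar fun k => {i : ι k // i ∈ s k}) M₀
        (LStarStructure (fun k => {i : ι k // i ∈ s k}) M₀ fun k i v => cls k i.1 v) ∧
      ∀ (A : Type) (instA : (LStar fun k => {i : ι k // i ∈ s k}).Structure A), Finite A →
        @IsKL (LStar fun k => {i : ι k // i ∈ s k}) A instA →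
        Nonempty (@Language.Embedding (LStar fun k => {i : ι k // i ∈ s k}) A M₀ instA
          (LStarStructure (fun k => {i : ι k // i ∈ s k}) M₀ fun k i v => cls k i.1 v)) := by
  intro s hs
  let L' := LStar fun k => {i : ι k // i ∈ s k}
  let : (LStar ι).Structure M₀ := LStarStructure ι M₀ cls
  let : L'.Structure M₀ := LStarStructure _ M₀ fun k i v => cls k i.1 v
  have : Finite (Σ k, L'.Relations k) := finite_sigma_subtype hs
  have : (LStarInclusion s).IsExpansionOn M₀ := ⟨fun {_} f => f.elim, fun _ _ => rfl⟩
  have hM : NamesClasses (LStar ι) M₀ := ⟨harity, hcls, hsurj, hdistinct⟩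
  have hφ := LStarInclusion_injective s
  exact ⟨hM.isUltrahomogeneous_reduct (LStarInclusion s) hUH hage hφ,
    fun A _ _ hA => hM.nonempty_embedding_reduct (LStarInclusion s) hUH hage hφ A hA⟩
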